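/- For every n ≥ 1 and every γ ∈ ((n+1)/(n+2), 1], the γ-Hölder homotopy group π_n^γ(ℍ^n) is nontrivial. Concretely: there exists a map f : S^n → ℝ^{2n+1} (S^n the unit sphere in ℝ^{n+1}) which is Lipschitz as a map into ℍ^n (there is L with d_K(f(x), f(y)) ≤ L·|x−y| for all x, y ∈ S^n), in particular γ-Hölder into ℍ^n, such that there exists no map F : B̄^{n+1} → ℝ^{2n+1} with F restricted to S^n equal to f and with F γ-Hölder continuous as a map into ℍ^n (i.e. d_K(F(x), F(y)) ≤ C·|x−y|^γ for some C and all x, y in the closed unit ball B̄^{n+1}). -/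

import Mathlib

open Metric Set MeasureTheory Topology

/-- The index of the coordinate `x_j` in `ℝ^{2n+1}`. -/
def xI (n : ℕ) (j : Fin n) : Fin (2*n+1) := ⟨2*j.1, by have := j.2; omega⟩

/-- The index of the coordinate `y_j` in `ℝ^{2n+1}`. -/
def yI (n : ℕ) (j : Fin n) : Fin (2*n+1) := ⟨2*j.1+1, by have := j.2; omega⟩

/-- The index of the coordinate `t` in `ℝ^{2n+1}`. -/
def tI (n : ℕ) : Fin (2*n+1) := Fin.last (2*n)

/-- The Korányi metric on the Heisenberg group `ℍ^n = ℝ^{2n+1}`: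
`d_K(p,q) = (|z-z'|^4 + |t - t' + 2 ∑_j (x_j' y_j - x_j y_j')|^2)^{1/4}`. -/
noncomputable def dK (n : ℕ) (p q : EuclideanSpace ℝ (Fin (2*n+1))) : ℝ :=
  ((∑ i : Fin (2*n), (p (Fin.castSucc i) - q (Fin.castSucc i)) ^ 2) ^ 2 +
    (p (tI n) - q (tI n) +
      2 * ∑ j : Fin n, (q (xI n j) * p (yI n j) - p (xI n j) * q (yI n j))) ^ 2) ^ ((1:ℝ)/4)

section NullLagrangian

variable {ι E : Type*} [NormedAddCommGroup E] [NormedSpace ℝ E]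

/-- The Jacobian matrix of the tuple `w`, with derivatives taken along the vectors `b j`. -/
noncomputable def jacobianMatrix (b : ι → E) (w : ι → E → ℝ) (x : E) : Matrix ι ι ℝ :=
  Matrix.of fun i j => fderiv ℝ (w i) x (b j)

lemma jacobianMatrix_apply (b : ι → E) (w : ι → E → ℝ) (x : E) (i j : ι) :
    jacobianMatrix b w x i j = fderiv ℝ (w i) x (b j) := rfl

variable [Fintype ι] [DecidableEq ι]

lemma continuous_det_jacobianMatrix (b : ι → E) {w : ι → E → ℝ}
    (hw : ∀ i, ContDiff ℝ 2 (w i)) : Continuous fun x => (jacobianMatrix b w x).det := by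
  refine Continuous.matrix_det (continuous_matrix fun i j => ?_)
  exact ((hw i).continuous_fderiv (by norm_num)).clm_apply continuous_const

/-- Swapping two indices in the sum defining a determinant kills the symmetric second derivative. -/
lemma sum_sign_mul_secondDeriv_eq_zero (b : ι → E) {w : ι → E → ℝ}
    (hw : ∀ i, ContDiff ℝ 2 (w i)) (x : E) {j k : ι} (hjk : j ≠ k) :
    ∑ σ : Equiv.Perm ι, ((Equiv.Perm.sign σ : ℤ) : ℝ) *
      ((∏ i ∈ (Finset.univ.erase k).erase j, fderiv ℝ (w i) x (b (σ i))) *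
        fderiv ℝ (fun y => fderiv ℝ (w j) y (b (σ j))) x (b (σ k))) = 0 := by
  have hsymm : ∀ p q : E, fderiv ℝ (fun y => fderiv ℝ (w j) y p) x q =
      fderiv ℝ (fun y => fderiv ℝ (w j) y q) x p := by
    intro p q
    have hd : DifferentiableAt ℝ (fderiv ℝ (w j)) x :=
      ((hw j).fderiv_right (m := 1) (by norm_num)).differentiable (by norm_num) x
    have h1 : ∀ p q : E, fderiv ℝ (fun y => fderiv ℝ (w j) y p) x q =
        fderiv ℝ (fderiv ℝ (w j)) x q p := by
      intro p q
      rw [fderiv_clm_apply hd (differentiableAt_const _)]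
      simp
    rw [h1, h1]
    exact ((hw j).contDiffAt.isSymmSndFDerivAt (by simp)).eq _ _
  refine self_eq_neg.mp ?_
  rw [← Finset.sum_neg_distrib]
  conv_lhs => rw [← Equiv.sum_comp (Equiv.mulRight (Equiv.swap k j))]
  refine Finset.sum_congr rfl fun σ _ => ?_
  have hprod : ∏ i ∈ (Finset.univ.erase k).erase j,
      fderiv ℝ (w i) x (b (σ (Equiv.swap k j i))) =
      ∏ i ∈ (Finset.univ.erase k).erase j, fderiv ℝ (w i) x (b (σ i)) := by
    refine Finset.prod_congr rfl fun i hi => ?_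
    simp only [Finset.mem_erase, Finset.mem_univ, and_true] at hi
    rw [Equiv.swap_apply_of_ne_of_ne hi.2 hi.1]
  simp only [Equiv.coe_mulRight, Equiv.Perm.mul_apply, hprod, Equiv.Perm.sign_mul,
    Equiv.Perm.sign_swap hjk.symm, Equiv.swap_apply_left, Equiv.swap_apply_right]
  rw [hsymm]
  simp

variable [FiniteDimensional ℝ E] [MeasurableSpace E] [BorelSpace E] (μ : Measure E)
  [μ.IsAddHaarMeasure]

/-- The Jacobian determinant is a null Lagrangian: it integrates to zero as soon as one component
has compact support. -/
theorem integral_det_jacobianMatrix_eq_zero (b : ι → E) {w : ι → E → ℝ}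
    (hw : ∀ i, ContDiff ℝ 2 (w i)) {k : ι} (hk : HasCompactSupport (w k)) :
    ∫ x, (jacobianMatrix b w x).det ∂μ = 0 := by
  have hcd : ∀ i p, ContDiff ℝ 1 fun y => fderiv ℝ (w i) y p := fun i p =>
    ((hw i).fderiv_right (m := 1) (by norm_num)).clm_apply contDiff_const
  set P : Equiv.Perm ι → E → ℝ := fun σ x =>
    ∏ i ∈ Finset.univ.erase k, fderiv ℝ (w i) x (b (σ i)) with hP
  have hPcd : ∀ σ, ContDiff ℝ 1 (P σ) := fun σ => contDiff_prod fun i _ => hcd i _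
  have hPc : ∀ σ, Continuous (P σ) := fun σ => (hPcd σ).continuous
  have hP'c : ∀ σ v, Continuous fun x => fderiv ℝ (P σ) x v := fun σ v =>
    ((hPcd σ).continuous_fderiv (by norm_num)).clm_apply continuous_const
  have hdet : ∀ x, (jacobianMatrix b w x).det = ∑ σ : Equiv.Perm ι,
      ((Equiv.Perm.sign σ : ℤ) : ℝ) * (P σ x * fderiv ℝ (w k) x (b (σ k))) := by
    intro x
    rw [← Matrix.det_transpose, Matrix.det_apply']
    refine Finset.sum_congr rfl fun σ _ => ?_
    rw [← Finset.prod_erase_mul _ _ (Finset.mem_univ k)]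
    rfl
  have hk' : ∀ v, HasCompactSupport fun x => fderiv ℝ (w k) x v := fun v =>
    (hk.fderiv (𝕜 := ℝ)).comp_left (g := fun L : E →L[ℝ] ℝ => L v) (by simp)
  have hint : ∀ σ : Equiv.Perm ι, Integrable (fun x => P σ x * fderiv ℝ (w k) x (b (σ k))) μ :=
    fun σ => ((hPc σ).mul (hcd k _).continuous).integrable_of_hasCompactSupport (hk' _).mul_left
  have hint' : ∀ σ : Equiv.Perm ι, Integrable (fun x => fderiv ℝ (P σ) x (b (σ k)) * w k x) μ :=
    fun σ => ((hP'c σ _).mul (hw k).continuous).integrable_of_hasCompactSupport hk.mul_left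
  have hparts : ∀ σ : Equiv.Perm ι, ∫ x, P σ x * fderiv ℝ (w k) x (b (σ k)) ∂μ =
      - ∫ x, fderiv ℝ (P σ) x (b (σ k)) * w k x ∂μ := fun σ =>
    integral_mul_fderiv_eq_neg_fderiv_mul_of_integrable (hint' σ) (hint σ)
      (((hPc σ).mul (hw k).continuous).integrable_of_hasCompactSupport hk.mul_left)
      (fun x _ => (hPcd σ).differentiable (by norm_num) x)
      (fun x _ => (hw k).differentiable (by norm_num) x)
  have hP' : ∀ σ x v, fderiv ℝ (P σ) x v = ∑ j ∈ Finset.univ.erase k,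
      (∏ i ∈ (Finset.univ.erase k).erase j, fderiv ℝ (w i) x (b (σ i))) *
        fderiv ℝ (fun y => fderiv ℝ (w j) y (b (σ j))) x v := by
    intro σ x v
    rw [hP]
    simp only
    rw [fderiv_finsetProd fun i _ => (hcd i _).differentiable (by norm_num) x]
    simp
  simp_rw [hdet]
  rw [integral_finsetSum _ fun σ _ => (hint σ).const_mul _]
  simp_rw [integral_const_mul, hparts, mul_neg, Finset.sum_neg_distrib, ← integral_const_mul]
  rw [← integral_finsetSum _ fun σ _ => (hint' σ).const_mul _, neg_eq_zero]
  refine integral_eq_zero_of_ae (.of_forall fun x => ?_)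
  simp only [hP', Pi.zero_apply, ← mul_assoc, ← Finset.sum_mul]
  refine mul_eq_zero_of_left ?_ _
  simp only [Finset.mul_sum]
  rw [Finset.sum_comm]
  refine Finset.sum_eq_zero fun j hj => ?_
  exact sum_sign_mul_secondDeriv_eq_zero b hw x (Finset.ne_of_mem_erase hj)

/-- The integral of the Jacobian determinant only depends on the behaviour at infinity. -/
theorem integral_det_jacobianMatrix_sub_eq_zero (b : ι → E) {v w : ι → E → ℝ}
    (hv : ∀ i, ContDiff ℝ 2 (v i)) (hw : ∀ i, ContDiff ℝ 2 (w i))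
    (hvw : ∀ i, HasCompactSupport (v i - w i)) :
    ∫ x, ((jacobianMatrix b v x).det - (jacobianMatrix b w x).det) ∂μ = 0 := by
  suffices h : ∀ s : Finset ι,
      Integrable (fun x => (jacobianMatrix b (s.piecewise v w) x).det -
        (jacobianMatrix b w x).det) μ ∧
      ∫ x, ((jacobianMatrix b (s.piecewise v w) x).det - (jacobianMatrix b w x).det) ∂μ = 0 by
    simpa using (h Finset.univ).2
  intro s
  induction s using Finset.induction_on with
  | empty => simp
  | insert k s hks ih =>
    set p := s.piecewise v w with hp
    set d := Function.update p k (v k - w k) with hd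
    have hpcd : ∀ i, ContDiff ℝ 2 (p i) := by
      intro i
      by_cases hi : i ∈ s
      · simpa [hp, hi] using hv i
      · simpa [hp, hi] using hw i
    have hdcd : ∀ i, ContDiff ℝ 2 (d i) := by
      intro i
      by_cases hi : i = k
      · subst hi
        simp only [hd, Function.update_self]
        exact (hv i).sub (hw i)
      · simpa [hd, hi] using hpcd i
    have hdk : HasCompactSupport (d k) := by simpa [hd] using hvw k
    have hsum : ∀ x, (jacobianMatrix b ((insert k s).piecewise v w) x).det =
        (jacobianMatrix b p x).det + (jacobianMatrix b d x).det := by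
      intro x
      have hrow : ∀ u : E → ℝ, jacobianMatrix b (Function.update p k u) x =
          (jacobianMatrix b p x).updateRow k (fun j => fderiv ℝ u x (b j)) := by
        intro u
        ext i j
        by_cases hi : i = k
        · subst hi; simp [jacobianMatrix_apply]
        · simp [jacobianMatrix_apply, hi]
      have hpk : p k = w k := by simp [hp, hks]
      have h1 := hrow (p k)
      rw [Function.update_eq_self] at h1
      rw [Finset.piecewise_insert, hd, hrow, hrow, h1, Matrix.updateRow_idem,
        Matrix.updateRow_idem, ← Matrix.det_updateRow_add]
      congr 2
      ext j
      simp only [Pi.add_apply, hpk]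
      rw [fderiv_sub ((hv k).differentiable (by norm_num) x)
        ((hw k).differentiable (by norm_num) x)]
      simp
    have hdet0 : HasCompactSupport fun x => (jacobianMatrix b d x).det := by
      refine (hdk.fderiv (𝕜 := ℝ)).mono fun x hx => ?_
      contrapose! hx
      simp only [Function.mem_support, not_not] at hx ⊢
      exact Matrix.det_eq_zero_of_row_eq_zero k fun j => by simp [jacobianMatrix_apply, hx]
    have hint : Integrable (fun x => (jacobianMatrix b d x).det) μ :=
      (continuous_det_jacobianMatrix b hdcd).integrable_of_hasCompactSupport hdet0
    simp_rw [hsum, add_sub_right_comm]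
    refine ⟨ih.1.add hint, ?_⟩
    rw [integral_add ih.1 hint, ih.2, integral_det_jacobianMatrix_eq_zero μ b hdcd hdk, add_zero]

end NullLagrangian

section Extension

/-- A smooth monotone function whose derivative is a given smooth bump function. -/
lemma exists_contDiff_hasDerivAt_bump (c : ℝ) (φ : ContDiffBump c) :
    ∃ h : ℝ → ℝ, ContDiff ℝ 2 h ∧ ∀ y, HasDerivAt h (φ y) y := by
  have hd : ∀ y, HasDerivAt (fun y => ∫ t in (0 : ℝ)..y, φ t) (φ y) y := fun y =>
    (φ.continuous.integral_hasStrictDerivAt 0 y).hasDerivAt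
  refine ⟨_, ?_, hd⟩
  rw [show (2 : WithTop ℕ∞) = 1 + 1 by norm_num, contDiff_succ_iff_deriv]
  refine ⟨fun y => (hd y).differentiableAt, by simp, ?_⟩
  rw [funext fun y => (hd y).deriv]
  exact φ.contDiff

lemma det_jacobianMatrix_comp {ι E : Type*} [Fintype ι] [DecidableEq ι] [NormedAddCommGroup E]
    [NormedSpace ℝ E] (b : ι → E) {h φ : ι → ℝ → ℝ} (hh : ∀ i y, HasDerivAt (h i) (φ i y) y)
    {u : ι → E → ℝ} (hu : ∀ i, Differentiable ℝ (u i)) (x : E) :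
    (jacobianMatrix b (fun i y => h i (u i y)) x).det =
      (∏ i, φ i (u i x)) * (jacobianMatrix b u x).det := by
  rw [← Matrix.det_mul_column]
  congr 1
  ext i j
  simp only [jacobianMatrix_apply, Matrix.of_apply]
  have := (hh i (u i x)).comp_hasFDerivAt x (hu i x).hasFDerivAt
  rw [show (fun y => h i (u i y)) = h i ∘ u i from rfl, this.fderiv]
  simp

variable {n : ℕ}

/-- The homeomorphism `(s, x) ↦ (s³, x)` of `ℝ^{n+1}`. -/
def cubeFirst (x : EuclideanSpace ℝ (Fin (n + 1))) : Fin (n + 1) → ℝ :=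
  Fin.cons (x 0 ^ 3) fun j => x j.succ

@[simp] lemma cubeFirst_zero (x : EuclideanSpace ℝ (Fin (n + 1))) :
    cubeFirst x 0 = x 0 ^ 3 := rfl

@[simp] lemma cubeFirst_succ (x : EuclideanSpace ℝ (Fin (n + 1))) (j : Fin n) :
    cubeFirst x j.succ = x j.succ := rfl

lemma contDiff_cubeFirst {m : WithTop ℕ∞} :
    ContDiff ℝ m (cubeFirst : EuclideanSpace ℝ (Fin (n + 1)) → Fin (n + 1) → ℝ) := by
  refine contDiff_pi.2 fun i => ?_
  induction i using Fin.cases with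
  | zero => simp only [cubeFirst_zero]; fun_prop
  | succ j => simp only [cubeFirst_succ]; fun_prop

lemma cubeFirst_injective :
    Function.Injective (cubeFirst : EuclideanSpace ℝ (Fin (n + 1)) → Fin (n + 1) → ℝ) := by
  intro x y hxy
  ext i
  induction i using Fin.cases with
  | zero => exact (Odd.strictMono_pow (by decide : Odd 3)).injective (congrFun hxy 0)
  | succ j => exact congrFun hxy j.succ

lemma det_jacobianMatrix_cubeFirst (x : EuclideanSpace ℝ (Fin (n + 1))) :
    (jacobianMatrix (fun j => EuclideanSpace.single j (1 : ℝ))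
      (fun i y => cubeFirst y i) x).det = 3 * x 0 ^ 2 := by
  have hproj : ∀ i : Fin (n + 1), HasFDerivAt (fun y : EuclideanSpace ℝ (Fin (n + 1)) => y i)
      (EuclideanSpace.proj i : EuclideanSpace ℝ (Fin (n + 1)) →L[ℝ] ℝ) x := fun i =>
    (EuclideanSpace.proj i : EuclideanSpace ℝ (Fin (n + 1)) →L[ℝ] ℝ).hasFDerivAt
  have hdiag : jacobianMatrix (fun j => EuclideanSpace.single j (1 : ℝ))
      (fun i y => cubeFirst y i) x = Matrix.diagonal (Fin.cons (3 * x 0 ^ 2) fun _ => 1) := by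
    ext i j
    rw [jacobianMatrix_apply]
    induction i using Fin.cases with
    | zero =>
      simp only [cubeFirst_zero]
      rw [((hproj 0).pow 3).fderiv]
      by_cases hj : j = 0
      · subst hj; simp
      · simp [Ne.symm hj]
    | succ i =>
      simp only [cubeFirst_succ]
      rw [(hproj i.succ).fderiv]
      by_cases hj : j = i.succ
      · subst hj; simp
      · simp [Ne.symm hj]
  rw [hdiag, Matrix.det_diagonal, Fin.prod_univ_succ]
  simp

/-- A point outside a null set that has a small preimage under `cubeFirst`. -/
lemma exists_cubeFirst_notMem {N : Set (Fin (n + 1) → ℝ)} (hN : volume N = 0) :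
    ∃ a : EuclideanSpace ℝ (Fin (n + 1)), ‖a‖ < 1 / 2 ∧ 0 < a 0 ∧ cubeFirst a ∉ N := by
  set η : ℝ := 1 / (2 * (n + 2)) with hη
  have hη0 : 0 < η := by positivity
  have hη1 : η ≤ 1 := by
    rw [hη, div_le_one (by positivity)]
    linarith [(Nat.cast_nonneg n : (0 : ℝ) ≤ n)]
  set U : Set (Fin (n + 1) → ℝ) := Set.pi univ fun _ => Ioo 0 (η ^ 3) with hU
  have hUpos : 0 < volume U :=
    (isOpen_set_pi finite_univ fun _ _ => isOpen_Ioo).measure_pos _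
      (univ_pi_nonempty_iff.2 fun _ => nonempty_Ioo.2 (by positivity))
  obtain ⟨c, hcU, hcN⟩ : ∃ c ∈ U, c ∉ N := by
    by_contra! h
    exact hUpos.ne' (measure_mono_null h hN)
  have hc : ∀ i, 0 < c i ∧ c i < η ^ 3 := fun i => hcU i (mem_univ i)
  obtain ⟨s, hs0, hs⟩ : ∃ s : ℝ, 0 ≤ s ∧ s ^ 3 = c 0 :=
    ⟨c 0 ^ ((3 : ℕ) : ℝ)⁻¹, Real.rpow_nonneg (hc 0).1.le _,
      Real.rpow_inv_natCast_pow (hc 0).1.le (by norm_num)⟩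
  set a : EuclideanSpace ℝ (Fin (n + 1)) := WithLp.toLp 2 (Fin.cons s fun j => c j.succ) with ha
  have hca : cubeFirst a = c := by
    ext i
    induction i using Fin.cases with
    | zero => simpa [ha] using hs
    | succ j => simp [ha]
  have hapos : 0 < s := hs0.lt_of_ne fun h => by
    have := (hc 0).1
    rw [← hs, ← h] at this
    norm_num at this
  have hai : ∀ i, a i ^ 2 ≤ η ^ 2 := by
    intro i
    induction i using Fin.cases with
    | zero =>
      have h : s ^ 3 < η ^ 3 := hs ▸ (hc 0).2
      have h' : s ≤ η := (lt_of_pow_lt_pow_left₀ 3 hη0.le h).le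
      simpa [ha] using pow_le_pow_left₀ hs0 h' 2
    | succ j =>
      have h1 := (hc j.succ).1.le
      have h2 : c j.succ ≤ η := (hc j.succ).2.le.trans (pow_le_of_le_one hη0.le hη1 (by norm_num))
      simpa [ha] using pow_le_pow_left₀ h1 h2 2
  refine ⟨a, ?_, by simpa [ha] using hapos, hca ▸ hcN⟩
  refine lt_of_pow_lt_pow_left₀ 2 (by norm_num) ?_
  rw [EuclideanSpace.real_norm_sq_eq]
  calc ∑ i, a i ^ 2 ≤ ∑ _i : Fin (n + 1), η ^ 2 := Finset.sum_le_sum fun i _ => hai i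
    _ = (n + 1) * η ^ 2 := by simp
    _ < (1 / 2) ^ 2 := by
      rw [hη, div_pow, ← mul_div_assoc, div_pow, div_lt_div_iff₀ (by positivity) (by positivity)]
      nlinarith [(Nat.cast_nonneg n : (0 : ℝ) ≤ n)]

lemma norm_le_of_dist_cubeFirst_lt {a x : EuclideanSpace ℝ (Fin (n + 1))} (ha : ‖a‖ < 1 / 2)
    (h : ∀ i, |cubeFirst x i - cubeFirst a i| < 1 / 2) : ‖x‖ ≤ n + 1 := by
  have hai : ∀ i, |a i| ≤ 1 / 2 := fun i => (PiLp.norm_apply_le a i).trans ha.le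
  have hca : ∀ i, |cubeFirst a i| ≤ 1 / 2 := by
    intro i
    induction i using Fin.cases with
    | zero =>
      rw [cubeFirst_zero, abs_pow]
      calc |a 0| ^ 3 ≤ (1 / 2) ^ 3 := pow_le_pow_left₀ (abs_nonneg _) (hai 0) 3
        _ ≤ 1 / 2 := by norm_num
    | succ j => exact hai _
  have hcx : ∀ i, |cubeFirst x i| ≤ 1 := by
    intro i
    have := abs_sub_abs_le_abs_sub (cubeFirst x i) (cubeFirst a i)
    linarith [h i, hca i]
  have hx : ∀ i, x i ^ 2 ≤ 1 := by
    intro i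
    rw [sq_le_one_iff_abs_le_one]
    induction i using Fin.cases with
    | zero =>
      have h0 := hcx 0
      rw [cubeFirst_zero, abs_pow] at h0
      exact (pow_le_one_iff_of_nonneg (abs_nonneg _) (by norm_num)).1 h0
    | succ j => exact hcx j.succ
  refine le_of_sq_le_sq ?_ (by positivity)
  rw [EuclideanSpace.real_norm_sq_eq]
  calc ∑ i, x i ^ 2 ≤ ∑ _i : Fin (n + 1), (1 : ℝ) := Finset.sum_le_sum fun i _ => hx i
    _ = n + 1 := by simp
    _ ≤ (n + 1) ^ 2 := by nlinarith [(Nat.cast_nonneg n : (0 : ℝ) ≤ n)]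

/-- A continuous map of the closed ball which agrees with `cubeFirst` on the sphere does not have a
null image. -/
theorem volume_image_closedBall_ne_zero {g : EuclideanSpace ℝ (Fin (n + 1)) → Fin (n + 1) → ℝ}
    (hg : ContinuousOn g (closedBall 0 1)) (hgS : ∀ x ∈ sphere 0 1, g x = cubeFirst x) :
    volume (g '' closedBall 0 1) ≠ 0 := by
  classical
  intro hnull
  obtain ⟨a, ha, ha0, hag⟩ := exists_cubeFirst_notMem hnull
  set u : EuclideanSpace ℝ (Fin (n + 1)) → Fin (n + 1) → ℝ :=
    (closedBall 0 1).piecewise g cubeFirst with hu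
  have hu_out : ∀ x, 1 ≤ ‖x‖ → u x = cubeFirst x := by
    intro x hx
    rcases hx.eq_or_lt with h | h
    · rw [hu, piecewise_eq_of_mem _ _ _ (by simp [h.symm.le]), hgS x (by simp [← h])]
    · exact piecewise_eq_of_notMem _ _ _ (by simpa using h)
  have hucont : Continuous u := by
    rw [← continuousOn_univ]
    have hcl : IsClosed {x : EuclideanSpace ℝ (Fin (n + 1)) | 1 ≤ ‖x‖} :=
      isClosed_le continuous_const continuous_norm
    refine (ContinuousOn.union_of_isClosed (s := closedBall 0 1) ?_ ?_ isClosed_closedBall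
      hcl).mono fun x _ => ?_
    · exact hg.congr fun x hx => piecewise_eq_of_mem _ _ _ hx
    · exact (contDiff_cubeFirst (m := 0)).continuous.continuousOn.congr fun x hx => hu_out x hx
    · rcases le_total ‖x‖ 1 with h | h
      · exact Or.inl (by simpa using h)
      · exact Or.inr h
  have hua : ∀ x, u x ≠ cubeFirst a := by
    intro x hx
    by_cases hxB : x ∈ closedBall (0 : EuclideanSpace ℝ (Fin (n + 1))) 1
    · rw [hu, piecewise_eq_of_mem _ _ _ hxB] at hx
      exact hag ⟨x, hxB, hx⟩
    · rw [hu, piecewise_eq_of_notMem _ _ _ hxB] at hx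
      rw [cubeFirst_injective hx] at hxB
      exact hxB (by simp; linarith)
  obtain ⟨δ, hδ0, hδ⟩ : ∃ δ > 0, ∀ x ∈ closedBall (0 : EuclideanSpace ℝ (Fin (n + 1))) (n + 2),
      δ ≤ dist (u x) (cubeFirst a) := by
    obtain ⟨x₀, -, hx₀⟩ := (isCompact_closedBall (0 : EuclideanSpace ℝ (Fin (n + 1)))
      ((n : ℝ) + 2)).exists_isMinOn ⟨0, by simp; positivity⟩
      (hucont.dist continuous_const).continuousOn
    exact ⟨_, dist_pos.2 (hua x₀), fun x hx => hx₀ hx⟩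
  set ρ : ℝ := min (δ / 2) (1 / 2) with hρ
  have hρ0 : 0 < ρ := by positivity
  obtain ⟨v, hvcd, hvu, hvS, -⟩ := hucont.exists_contDiff_approx_and_eqOn 2
    (continuous_const (y := ρ)) (fun _ => hρ0)
    (S := {x | (n : ℝ) + 2 ≤ ‖x‖}) (U := {x | 1 < ‖x‖})
    (isClosed_le continuous_const continuous_norm)
    ((isOpen_lt continuous_const continuous_norm).mem_nhdsSet.2 fun x hx => by
      have : (n : ℝ) + 2 ≤ ‖x‖ := hx
      show 1 < ‖x‖
      linarith [(Nat.cast_nonneg n : (0 : ℝ) ≤ n)])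
    (contDiff_cubeFirst.contDiffOn.congr fun x hx => hu_out x (le_of_lt hx))
  have hv_out : ∀ x, (n : ℝ) + 2 ≤ ‖x‖ → v x = cubeFirst x := fun x hx =>
    (hvS hx).trans (hu_out x (by linarith [(Nat.cast_nonneg n : (0 : ℝ) ≤ n)]))
  -- `v` stays away from the cube of radius `ρ` around `cubeFirst a`
  have hva : ∀ x, ∃ i, ρ ≤ |v x i - cubeFirst a i| := by
    intro x
    by_contra! h
    rcases le_or_gt ((n : ℝ) + 2) ‖x‖ with hx | hx
    · rw [hv_out x hx] at h
      have := norm_le_of_dist_cubeFirst_lt ha fun i => (h i).trans_le (min_le_right _ _)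
      linarith
    · have h1 := hδ x (by simpa using hx.le)
      have h2 : dist (v x) (cubeFirst a) < ρ := (dist_pi_lt_iff hρ0).2 h
      have h3 := dist_triangle_left (u x) (cubeFirst a) (v x)
      have h4 := hvu x
      have h5 := min_le_left (δ / 2) (1 / 2)
      linarith
  let φ : ∀ i, ContDiffBump (cubeFirst a i) := fun _ => ⟨ρ / 2, ρ, by positivity, by linarith⟩
  choose h hhcd hhd using fun i => exists_contDiff_hasDerivAt_bump _ (φ i)
  have hcomp : ∀ {w : EuclideanSpace ℝ (Fin (n + 1)) → Fin (n + 1) → ℝ}, ContDiff ℝ 2 w →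
      ∀ i, ContDiff ℝ 2 fun x => h i (w x i) := fun hw i =>
    (hhcd i).comp (contDiff_pi.1 hw i)
  set J : (EuclideanSpace ℝ (Fin (n + 1)) → Fin (n + 1) → ℝ) →
      EuclideanSpace ℝ (Fin (n + 1)) → ℝ := fun w x =>
    (jacobianMatrix (fun j => EuclideanSpace.single j (1 : ℝ)) (fun i y => h i (w y i)) x).det
    with hJ
  have hJapply : ∀ {w : EuclideanSpace ℝ (Fin (n + 1)) → Fin (n + 1) → ℝ}, ContDiff ℝ 2 w →
      ∀ x, J w x = (∏ i, φ i (w x i)) * (jacobianMatrix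
        (fun j => EuclideanSpace.single j (1 : ℝ)) (fun i y => w y i) x).det := fun hw x =>
    det_jacobianMatrix_comp _ hhd
      (fun i => (contDiff_pi.1 hw i).differentiable (by norm_num)) x
  have hJv : ∀ x, J v x = 0 := by
    intro x
    obtain ⟨i, hi⟩ := hva x
    rw [hJapply hvcd, Finset.prod_eq_zero (Finset.mem_univ i) ((φ i).zero_of_le_dist hi), zero_mul]
  have hJc : ∀ x, J cubeFirst x = (∏ i, φ i (cubeFirst x i)) * (3 * x 0 ^ 2) := fun x => by
    rw [hJapply contDiff_cubeFirst, det_jacobianMatrix_cubeFirst]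
  have hint := integral_det_jacobianMatrix_sub_eq_zero volume
    (fun j => EuclideanSpace.single j (1 : ℝ)) (hcomp hvcd)
    (hcomp contDiff_cubeFirst) fun i => by
      refine HasCompactSupport.intro (isCompact_closedBall 0 ((n : ℝ) + 2)) fun x hx => ?_
      have hx' : (n : ℝ) + 2 < ‖x‖ := by simpa using hx
      simp [hv_out x hx'.le]
  have hint' : ∫ x, J cubeFirst x = 0 := by
    change ∫ x, (J v x - J cubeFirst x) = 0 at hint
    simpa [hJv, integral_neg] using hint
  refine (Continuous.integral_pos_of_hasCompactSupport_nonneg_nonzero (μ := volume) (x := a)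
    (continuous_det_jacobianMatrix _ (hcomp contDiff_cubeFirst)) ?_ ?_ ?_).ne' hint'
  · refine HasCompactSupport.intro (isCompact_closedBall 0 ((n : ℝ) + 2)) fun x hx => ?_
    have hx' : (n : ℝ) + 2 < ‖x‖ := by simpa using hx
    change J cubeFirst x = 0
    obtain ⟨i, hi⟩ := hva x
    rw [hv_out x hx'.le] at hi
    rw [hJc, Finset.prod_eq_zero (Finset.mem_univ i) ((φ i).zero_of_le_dist hi), zero_mul]
  · intro x
    change 0 ≤ J cubeFirst x
    rw [hJc]
    exact mul_nonneg (Finset.prod_nonneg fun i _ => (φ i).nonneg) (by positivity)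
  · change J cubeFirst a ≠ 0
    rw [hJc]
    have : ∀ i, φ i (cubeFirst a i) = 1 := fun i =>
      (φ i).one_of_mem_closedBall (mem_closedBall_self (φ i).rIn_pos.le)
    simp [this, ha0.ne']

end Extension

section ShearedBox

variable {n : ℕ}

lemma volume_shearedBox_le (c : Fin (n + 1) → ℝ) (l : Fin n → ℝ) {a b : ℝ} (ha : 0 ≤ a) :
    volume {y : Fin (n + 1) → ℝ | (∀ j : Fin n, |y j.succ - c j.succ| ≤ a) ∧
      |y 0 - c 0 - ∑ j, l j * (y j.succ - c j.succ)| ≤ b} ≤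
      ENNReal.ofReal (2 * b * (2 * a) ^ n) := by
  set M : Matrix (Fin (n + 1)) (Fin (n + 1)) ℝ := Matrix.of
    (Fin.cons (Fin.cons 1 fun j => -l j) fun i => Pi.single i.succ 1) with hM
  have hMdet : M.det = 1 := by
    rw [Matrix.det_of_isUpperTriangular]
    · rw [Fin.prod_univ_succ]
      simp [hM]
    · intro i j hij
      induction i using Fin.cases with
      | zero => simp at hij
      | succ i =>
        have : j ≠ i.succ := fun h => by simp [h] at hij
        simp [hM, this]
  have hM0 : ∀ y, Matrix.toLin' M y 0 = y 0 - ∑ j, l j * y j.succ := by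
    intro y
    simp [hM, Matrix.mulVec, dotProduct, Fin.sum_univ_succ, sub_eq_add_neg]
  have hMs : ∀ y (j : Fin n), Matrix.toLin' M y j.succ = y j.succ := by
    intro y j
    simp [hM, Matrix.mulVec, dotProduct, Pi.single_apply]
  set S : Set (Fin (n + 1) → ℝ) := Set.pi univ fun i =>
    closedBall (Matrix.toLin' M c i) ((Fin.cons b fun _ => a : Fin (n + 1) → ℝ) i) with hS
  have hmap := Real.map_matrix_volume_pi_eq_smul_volume_pi (M := M) (by simp [hMdet])
  have hmeas : Measurable (Matrix.toLin' M) :=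
    (LinearMap.continuous_of_finiteDimensional _).measurable
  have hSmeas : MeasurableSet S := MeasurableSet.univ_pi fun i => measurableSet_closedBall
  calc volume _ ≤ volume (Matrix.toLin' M ⁻¹' S) := by
        refine measure_mono fun y hy => ?_
        simp only [hS, mem_preimage, mem_pi, mem_univ, true_imp_iff, mem_closedBall, Real.dist_eq]
        intro i
        induction i using Fin.cases with
        | zero =>
          rw [hM0, hM0, Fin.cons_zero]
          convert hy.2 using 2
          simp only [mul_sub, Finset.sum_sub_distrib]
          ring
        | succ j => simpa [hMs] using hy.1 j
    _ = volume S := by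
        rw [← Measure.map_apply hmeas hSmeas, hmap]
        simp [hMdet]
    _ ≤ ENNReal.ofReal (2 * b * (2 * a) ^ n) := by
        rw [hS, volume_pi_pi, Fin.prod_univ_succ]
        simp only [Real.volume_closedBall, Fin.cons_zero, Fin.cons_succ, Finset.prod_const,
          Finset.card_univ, Fintype.card_fin]
        rw [← ENNReal.ofReal_pow (by positivity), ← ENNReal.ofReal_mul' (by positivity)]

variable {g : EuclideanSpace ℝ (Fin (n + 1)) → Fin (n + 1) → ℝ}
  {l : EuclideanSpace ℝ (Fin (n + 1)) → Fin n → ℝ}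
  {K : Set (EuclideanSpace ℝ (Fin (n + 1)))} {A B γ : ℝ}

/-- A map whose last `n` components are `γ`-Hölder and whose first component is, up to a linear
function of the others, `2γ`-Hölder at each point, has a null image when `γ > (n+1)/(n+2)`. -/
theorem volume_image_eq_zero_of_shearedHolder
    (hγ : ((n : ℝ) + 1) / ((n : ℝ) + 2) < γ) (hA : 0 ≤ A) (hB : 0 ≤ B) (hK : volume K ≠ ⊤)
    (hg : ∀ p ∈ K, ∀ q ∈ K, ∀ j : Fin n, |g q j.succ - g p j.succ| ≤ A * dist q p ^ γ)
    (hg0 : ∀ p ∈ K, ∀ q ∈ K,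
      |g q 0 - g p 0 - ∑ j, l p j * (g q j.succ - g p j.succ)| ≤ B * dist q p ^ (2 * γ)) :
    volume (g '' K) = 0 := by
  have hγ0 : 0 < γ := lt_trans (by positivity) hγ
  set θ : ℝ := (n + 2) * γ - (n + 1) with hθ
  have hθ0 : 0 < θ := by
    rw [div_lt_iff₀ (by positivity)] at hγ
    linarith
  set D : ℝ := 2 * B * (2 * A) ^ n with hD
  have hD0 : 0 ≤ D := by positivity
  set V := volume (ball (0 : EuclideanSpace ℝ (Fin (n + 1))) 1) with hV
  have hV0 : V ≠ 0 := (measure_ball_pos _ _ one_pos).ne'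
  have hVtop : V ≠ ⊤ := measure_ball_lt_top.ne
  have hball : ∀ p ∈ K, ∀ r, 0 < r → volume (g '' (closedBall p r ∩ K)) ≤
      ENNReal.ofReal (D * r ^ θ) * V⁻¹ * volume (closedBall p r) := by
    intro p hp r hr
    have hr0 := hr.le
    rw [Measure.addHaar_closedBall _ _ hr0, ← hV, mul_comm _ V, mul_assoc,
      ← mul_assoc V⁻¹, ENNReal.inv_mul_cancel hV0 hVtop, one_mul,
      ← ENNReal.ofReal_mul (by positivity)]
    refine (measure_mono ?_).trans ((volume_shearedBox_le (g p) (l p) (a := A * r ^ γ)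
      (b := B * r ^ (2 * γ)) (by positivity)).trans (ENNReal.ofReal_le_ofReal (le_of_eq ?_)))
    · rintro _ ⟨q, ⟨hq, hqK⟩, rfl⟩
      have hd : dist q p ≤ r := hq
      exact ⟨fun j => (hg p hp q hqK j).trans (by gcongr), (hg0 p hp q hqK).trans (by gcongr)⟩
    · have h1 : r ^ (2 * γ) * (r ^ γ) ^ n = r ^ θ * r ^ (n + 1) := by
        rw [← Real.rpow_natCast, ← Real.rpow_natCast, ← Real.rpow_mul hr0, ← Real.rpow_add hr,
          ← Real.rpow_add hr, hθ]
        congr 1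
        push_cast
        ring
      rw [finrank_euclideanSpace, Fintype.card_fin, mul_assoc D, ← h1, hD]
      ring
  have hbound : ∀ δ : ℝ, 0 < δ →
      volume (g '' K) ≤ ENNReal.ofReal (D * δ ^ θ) * (V⁻¹ * (volume K + 1)) := by
    intro δ hδ
    obtain ⟨t, r, htc, htK, hr, hcov, hsum⟩ :=
      Besicovitch.exists_closedBall_covering_tsum_measure_le volume one_ne_zero
        (fun _ => Ioo 0 δ) K fun x _ η hη => ⟨min δ η / 2, by
          have : 0 < min δ η := lt_min hδ hη
          have h1 := min_le_left δ η
          have h2 := min_le_right δ η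
          refine ⟨⟨?_, ?_⟩, ?_, ?_⟩ <;> linarith⟩
    have : Countable t := htc.to_subtype
    calc volume (g '' K) ≤ volume (⋃ x : t, g '' (closedBall x.1 (r x) ∩ K)) := by
          refine measure_mono ?_
          rintro _ ⟨q, hq, rfl⟩
          obtain ⟨x, hx, hqx⟩ := mem_iUnion₂.1 (hcov hq)
          exact mem_iUnion.2 ⟨⟨x, hx⟩, q, ⟨hqx, hq⟩, rfl⟩
      _ ≤ ∑' x : t, volume (g '' (closedBall x.1 (r x) ∩ K)) := measure_iUnion_le _
      _ ≤ ∑' x : t, ENNReal.ofReal (D * δ ^ θ) * V⁻¹ * volume (closedBall x.1 (r x)) := by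
          refine ENNReal.tsum_le_tsum fun x => (hball x (htK x.2) _ (hr x x.2).1).trans ?_
          have h1 := (hr x x.2).1.le
          have h2 := (hr x x.2).2.le
          gcongr
      _ ≤ ENNReal.ofReal (D * δ ^ θ) * (V⁻¹ * (volume K + 1)) := by
          rw [ENNReal.tsum_mul_left, mul_assoc]
          gcongr
  have hfin : V⁻¹ * (volume K + 1) ≠ ⊤ :=
    ENNReal.mul_ne_top (ENNReal.inv_ne_top.2 hV0) (by simp [hK])
  have htend : Filter.Tendsto
      (fun δ : ℝ => ENNReal.ofReal (D * δ ^ θ) * (V⁻¹ * (volume K + 1))) (𝓝[>] 0) (𝓝 0) := by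
    have h1 : Filter.Tendsto (fun δ : ℝ => D * δ ^ θ) (𝓝[>] 0) (𝓝 0) := by
      have := ((Real.continuous_rpow_const hθ0.le).const_mul D).tendsto 0
      simp only [Real.zero_rpow hθ0.ne', mul_zero] at this
      exact this.mono_left nhdsWithin_le_nhds
    have h2 := ENNReal.Tendsto.mul_const (ENNReal.tendsto_ofReal h1) (Or.inr hfin)
    simpa using h2
  exact le_antisymm (ge_of_tendsto htend
    (eventually_mem_nhdsWithin.mono fun δ hδ => hbound δ hδ)) zero_le

lemma continuousOn_of_shearedHolder (hγ : 0 < γ)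
    (hg : ∀ p ∈ K, ∀ q ∈ K, ∀ j : Fin n, |g q j.succ - g p j.succ| ≤ A * dist q p ^ γ)
    (hg0 : ∀ p ∈ K, ∀ q ∈ K,
      |g q 0 - g p 0 - ∑ j, l p j * (g q j.succ - g p j.succ)| ≤ B * dist q p ^ (2 * γ)) :
    ContinuousOn g K := by
  intro p hp
  have hd : ∀ α : ℝ, 0 < α → ∀ D : ℝ,
      Filter.Tendsto (fun q => D * dist q p ^ α) (𝓝[K] p) (𝓝 0) := by
    intro α hα D
    have : Continuous fun q => D * dist q p ^ α :=
      ((continuous_id.dist continuous_const).rpow_const fun _ => Or.inr hα.le).const_mul D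
    have h := (this.tendsto p).mono_left (nhdsWithin_le_nhds (s := K))
    simpa [Real.zero_rpow hα.ne'] using h
  have hs : ∀ j : Fin n, Filter.Tendsto (fun q => g q j.succ - g p j.succ) (𝓝[K] p) (𝓝 0) :=
    fun j => squeeze_zero_norm' (eventually_mem_nhdsWithin.mono fun q hq => hg p hp q hq j)
      (hd γ hγ A)
  have h0 : Filter.Tendsto (fun q => g q 0 - g p 0 - ∑ j, l p j * (g q j.succ - g p j.succ))
      (𝓝[K] p) (𝓝 0) :=
    squeeze_zero_norm' (eventually_mem_nhdsWithin.mono fun q hq => hg0 p hp q hq)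
      (hd _ (by positivity) B)
  refine tendsto_pi_nhds.2 fun i => tendsto_sub_nhds_zero_iff.1 ?_
  induction i using Fin.cases with
  | zero =>
    have := h0.add (tendsto_finsetSum Finset.univ fun j _ => (hs j).const_mul (l p j))
    simpa using this
  | succ j => exact hs j

end ShearedBox

section Heisenberg

variable {n : ℕ}

lemma sum_castSucc_eq_sum_xI_add_yI (F : Fin (2 * n + 1) → ℝ) :
    ∑ i : Fin (2 * n), F i.castSucc = ∑ j : Fin n, (F (xI n j) + F (yI n j)) := by
  rw [← Equiv.sum_comp (finProdFinEquiv.trans (finCongr (mul_comm n 2))), Fintype.sum_prod_type]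
  refine Finset.sum_congr rfl fun j _ => ?_
  rw [Fin.sum_univ_two]
  congr 2 <;> ext <;> simp [xI, yI]
  omega

/-- The `t`-component of `q⁻¹ * p` in the Heisenberg group. -/
def vertDiff (p q : EuclideanSpace ℝ (Fin (2 * n + 1))) : ℝ :=
  p (tI n) - q (tI n) + 2 * ∑ j : Fin n, (q (xI n j) * p (yI n j) - p (xI n j) * q (yI n j))

/-- The squared Euclidean distance of the horizontal components. -/
def horizSq (p q : EuclideanSpace ℝ (Fin (2 * n + 1))) : ℝ :=
  ∑ j : Fin n, ((p (xI n j) - q (xI n j)) ^ 2 + (p (yI n j) - q (yI n j)) ^ 2)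

lemma horizSq_nonneg (p q : EuclideanSpace ℝ (Fin (2 * n + 1))) : 0 ≤ horizSq p q :=
  Finset.sum_nonneg fun _ _ => by positivity

lemma dK_eq (p q : EuclideanSpace ℝ (Fin (2 * n + 1))) :
    dK n p q = (horizSq p q ^ 2 + vertDiff p q ^ 2) ^ ((4 : ℕ) : ℝ)⁻¹ := by
  rw [dK, sum_castSucc_eq_sum_xI_add_yI (fun i => (p i - q i) ^ 2)]
  norm_num [horizSq, vertDiff]

lemma dK_nonneg (p q : EuclideanSpace ℝ (Fin (2 * n + 1))) : 0 ≤ dK n p q := by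
  rw [dK_eq]
  positivity

lemma dK_pow_four (p q : EuclideanSpace ℝ (Fin (2 * n + 1))) :
    dK n p q ^ 4 = horizSq p q ^ 2 + vertDiff p q ^ 2 := by
  rw [dK_eq, Real.rpow_inv_natCast_pow (by positivity) (by norm_num)]

lemma horizSq_le_dK_sq (p q : EuclideanSpace ℝ (Fin (2 * n + 1))) :
    horizSq p q ≤ dK n p q ^ 2 := by
  refine le_of_sq_le_sq ?_ (by positivity)
  linarith [dK_pow_four p q, sq_nonneg (vertDiff p q),
    show (dK n p q ^ 2) ^ 2 = dK n p q ^ 4 by ring]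

lemma abs_vertDiff_le_dK_sq (p q : EuclideanSpace ℝ (Fin (2 * n + 1))) :
    |vertDiff p q| ≤ dK n p q ^ 2 := by
  refine abs_le_of_sq_le_sq ?_ (by positivity)
  linarith [dK_pow_four p q, sq_nonneg (horizSq p q),
    show (dK n p q ^ 2) ^ 2 = dK n p q ^ 4 by ring]

/-- The Legendrian lift of the Whitney sphere `(s, x) ↦ (x, s x)`. -/
noncomputable def whitneyLift (x : EuclideanSpace ℝ (Fin (n + 1))) :
    EuclideanSpace ℝ (Fin (2 * n + 1)) :=
  WithLp.toLp 2 fun i =>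
    if h : i.1 < 2 * n then
      (if i.1 % 2 = 0 then 1 else x 0) * x (Fin.succ ⟨i.1 / 2, by omega⟩)
    else -2 * (x 0 - x 0 ^ 3 / 3)

lemma whitneyLift_xI (x : EuclideanSpace ℝ (Fin (n + 1))) (j : Fin n) :
    whitneyLift x (xI n j) = x j.succ := by
  simp [whitneyLift, xI]
  rfl

lemma whitneyLift_yI (x : EuclideanSpace ℝ (Fin (n + 1))) (j : Fin n) :
    whitneyLift x (yI n j) = x 0 * x j.succ := by
  have h1 : (2 * j.1 + 1) / 2 = j.1 := by omega
  have h2 : 2 * j.1 + 1 < 2 * n := by omega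
  simp [whitneyLift, yI, h1, h2]
  exact Or.inl rfl

lemma whitneyLift_tI (x : EuclideanSpace ℝ (Fin (n + 1))) :
    whitneyLift x (tI n) = -2 * (x 0 - x 0 ^ 3 / 3) := by
  simp [whitneyLift, tI]

lemma sum_succ_sq_of_mem_sphere {x : EuclideanSpace ℝ (Fin (n + 1))} (hx : x ∈ sphere 0 1) :
    ∑ j : Fin n, x j.succ ^ 2 = 1 - x 0 ^ 2 := by
  have h := EuclideanSpace.real_norm_sq_eq x
  rw [mem_sphere_zero_iff_norm.1 hx, Fin.sum_univ_succ] at h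
  linarith

lemma dist_sq_eq_succ (x y : EuclideanSpace ℝ (Fin (n + 1))) :
    dist x y ^ 2 = (x 0 - y 0) ^ 2 + ∑ j : Fin n, (x j.succ - y j.succ) ^ 2 := by
  rw [dist_eq_norm, EuclideanSpace.real_norm_sq_eq, Fin.sum_univ_succ]
  simp

lemma horizSq_whitneyLift_le {x y : EuclideanSpace ℝ (Fin (n + 1))} (hx : x ∈ sphere 0 1)
    (hy : y ∈ sphere 0 1) : horizSq (whitneyLift x) (whitneyLift y) ≤ 5 * dist x y ^ 2 := by
  have hsx := sum_succ_sq_of_mem_sphere hx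
  have hsy := sum_succ_sq_of_mem_sphere hy
  have hx0 : x 0 ^ 2 ≤ 1 := by
    linarith [Finset.sum_nonneg fun (j : Fin n) (_ : j ∈ Finset.univ) => sq_nonneg (x j.succ)]
  rw [dist_sq_eq_succ]
  set Q := ∑ j : Fin n, (x j.succ - y j.succ) ^ 2 with hQ
  have hQ0 : 0 ≤ Q := Finset.sum_nonneg fun _ _ => by positivity
  calc horizSq (whitneyLift x) (whitneyLift y)
      ≤ ∑ j : Fin n, ((1 + 2 * x 0 ^ 2) * (x j.succ - y j.succ) ^ 2 +
          2 * (x 0 - y 0) ^ 2 * y j.succ ^ 2) := by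
        refine Finset.sum_le_sum fun j _ => ?_
        rw [whitneyLift_xI, whitneyLift_xI, whitneyLift_yI, whitneyLift_yI]
        nlinarith [sq_nonneg (x 0 * (x j.succ - y j.succ) - (x 0 - y 0) * y j.succ)]
    _ = (1 + 2 * x 0 ^ 2) * Q + 2 * (x 0 - y 0) ^ 2 * (1 - y 0 ^ 2) := by
        rw [Finset.sum_add_distrib, ← Finset.mul_sum, ← Finset.mul_sum, hsy]
    _ ≤ 5 * ((x 0 - y 0) ^ 2 + Q) := by
        nlinarith [mul_nonneg (sub_nonneg.2 hx0) hQ0, mul_nonneg (sq_nonneg (x 0 - y 0))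
          (sq_nonneg (y 0)), sq_nonneg (x 0 - y 0)]

lemma vertDiff_whitneyLift {x y : EuclideanSpace ℝ (Fin (n + 1))} (hx : x ∈ sphere 0 1)
    (hy : y ∈ sphere 0 1) : vertDiff (whitneyLift x) (whitneyLift y) =
      -(x 0 - y 0) * ((x 0 - y 0) ^ 2 / 3 + ∑ j : Fin n, (x j.succ - y j.succ) ^ 2) := by
  have hQ : ∑ j : Fin n, (x j.succ - y j.succ) ^ 2 =
      (1 - x 0 ^ 2) + (1 - y 0 ^ 2) - 2 * ∑ j : Fin n, x j.succ * y j.succ := by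
    rw [← sum_succ_sq_of_mem_sphere hx, ← sum_succ_sq_of_mem_sphere hy, Finset.mul_sum,
      ← Finset.sum_add_distrib, ← Finset.sum_sub_distrib]
    exact Finset.sum_congr rfl fun j _ => by ring
  have hS : ∑ j : Fin n, (whitneyLift y (xI n j) * whitneyLift x (yI n j) -
      whitneyLift x (xI n j) * whitneyLift y (yI n j)) =
      (x 0 - y 0) * ∑ j : Fin n, x j.succ * y j.succ := by
    rw [Finset.mul_sum]
    refine Finset.sum_congr rfl fun j _ => ?_
    rw [whitneyLift_xI, whitneyLift_xI, whitneyLift_yI, whitneyLift_yI]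
    ring
  rw [vertDiff, hS, hQ, whitneyLift_tI, whitneyLift_tI]
  ring

/-- `whitneyLift` is Lipschitz from the unit sphere to the Heisenberg group. -/
lemma dK_whitneyLift_le {x y : EuclideanSpace ℝ (Fin (n + 1))} (hx : x ∈ sphere 0 1)
    (hy : y ∈ sphere 0 1) : dK n (whitneyLift x) (whitneyLift y) ≤ 3 * dist x y := by
  have hd0 := dist_nonneg (x := x) (y := y)
  have hd2 : dist x y ≤ 2 := by
    have := dist_triangle_right x y 0
    rw [mem_sphere.1 hx, mem_sphere.1 hy] at this
    linarith
  have hH := horizSq_whitneyLift_le hx hy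
  have hV : |vertDiff (whitneyLift x) (whitneyLift y)| ≤ 2 * dist x y ^ 2 := by
    rw [vertDiff_whitneyLift hx hy, abs_mul, abs_neg]
    have hQ0 : 0 ≤ ∑ j : Fin n, (x j.succ - y j.succ) ^ 2 :=
      Finset.sum_nonneg fun _ _ => by positivity
    have h0 : |x 0 - y 0| ≤ 2 := by
      refine (abs_le_of_sq_le_sq ?_ hd0).trans hd2
      rw [dist_sq_eq_succ]
      linarith
    rw [abs_of_nonneg (by positivity : 0 ≤ (x 0 - y 0) ^ 2 / 3 +
      ∑ j : Fin n, (x j.succ - y j.succ) ^ 2)]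
    refine mul_le_mul h0 ?_ (by positivity) (by norm_num)
    rw [dist_sq_eq_succ]
    linarith [sq_nonneg (x 0 - y 0)]
  refine le_of_pow_le_pow_left₀ (n := 4) (by norm_num) (by positivity) ?_
  rw [dK_pow_four]
  have h1 := pow_le_pow_left₀ (horizSq_nonneg _ _) hH 2
  have h2 := pow_le_pow_left₀ (abs_nonneg _) hV 2
  rw [sq_abs] at h2
  have h3 : 0 ≤ dist x y ^ 4 := by positivity
  nlinarith

/-- The coordinates `(-(3/4)(t + 2 ∑ x_j y_j), x_1, …, x_n)`, the first of which differs from a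
linear function of the others to second order along horizontal directions. -/
noncomputable def frontCoord (p : EuclideanSpace ℝ (Fin (2 * n + 1))) : Fin (n + 1) → ℝ :=
  Fin.cons (-(3 / 4) * (p (tI n) + 2 * ∑ j : Fin n, p (xI n j) * p (yI n j)))
    fun j => p (xI n j)

@[simp] lemma frontCoord_zero (p : EuclideanSpace ℝ (Fin (2 * n + 1))) : frontCoord p 0 =
    -(3 / 4) * (p (tI n) + 2 * ∑ j : Fin n, p (xI n j) * p (yI n j)) := rfl

@[simp] lemma frontCoord_succ (p : EuclideanSpace ℝ (Fin (2 * n + 1))) (j : Fin n) :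
    frontCoord p j.succ = p (xI n j) := rfl

lemma abs_frontCoord_succ_sub_le (p q : EuclideanSpace ℝ (Fin (2 * n + 1))) (j : Fin n) :
    |frontCoord q j.succ - frontCoord p j.succ| ≤ dK n q p := by
  refine abs_le_of_sq_le_sq ((?_ : _ ≤ horizSq q p).trans (horizSq_le_dK_sq q p)) (dK_nonneg q p)
  refine le_trans ?_ (Finset.single_le_sum (fun i _ => by positivity) (Finset.mem_univ j))
  simp only [frontCoord_succ]
  linarith [sq_nonneg (q (yI n j) - p (yI n j))]

lemma abs_frontCoord_zero_sub_le (p q : EuclideanSpace ℝ (Fin (2 * n + 1))) :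
    |frontCoord q 0 - frontCoord p 0 -
      ∑ j, (-3 * p (yI n j)) * (frontCoord q j.succ - frontCoord p j.succ)| ≤
      2 * dK n q p ^ 2 := by
  have hid : frontCoord q 0 - frontCoord p 0 -
      ∑ j, (-3 * p (yI n j)) * (frontCoord q j.succ - frontCoord p j.succ) =
      -(3 / 4) * (vertDiff q p + 2 * ∑ j : Fin n,
        (q (xI n j) - p (xI n j)) * (q (yI n j) - p (yI n j))) := by
    have hs : ∑ j : Fin n, (p (xI n j) * q (yI n j) - q (xI n j) * p (yI n j)) +
        ∑ j : Fin n, (q (xI n j) - p (xI n j)) * (q (yI n j) - p (yI n j)) =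
        ∑ j : Fin n, q (xI n j) * q (yI n j) - ∑ j : Fin n, p (xI n j) * p (yI n j) +
        2 / 3 * ∑ j, (-3 * p (yI n j)) * (q (xI n j) - p (xI n j)) := by
      rw [Finset.mul_sum, ← Finset.sum_add_distrib, ← Finset.sum_sub_distrib,
        ← Finset.sum_add_distrib]
      exact Finset.sum_congr rfl fun j _ => by ring
    simp only [frontCoord_zero, frontCoord_succ, vertDiff]
    linear_combination (3 / 2) * hs
  have hR : |∑ j : Fin n, (q (xI n j) - p (xI n j)) * (q (yI n j) - p (yI n j))| ≤
      horizSq q p / 2 := by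
    refine (Finset.abs_sum_le_sum_abs _ _).trans ?_
    rw [horizSq, Finset.sum_div]
    refine Finset.sum_le_sum fun j _ => abs_le.2 ⟨?_, ?_⟩
    · nlinarith [sq_nonneg ((q (xI n j) - p (xI n j)) + (q (yI n j) - p (yI n j)))]
    · nlinarith [sq_nonneg ((q (xI n j) - p (xI n j)) - (q (yI n j) - p (yI n j)))]
  rw [hid, abs_mul]
  have h1 := abs_add_le (vertDiff q p) (2 * ∑ j : Fin n,
    (q (xI n j) - p (xI n j)) * (q (yI n j) - p (yI n j)))
  rw [abs_mul 2, abs_two] at h1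
  rw [show |-(3 / 4 : ℝ)| = 3 / 4 by norm_num]
  linarith [abs_vertDiff_le_dK_sq q p, horizSq_le_dK_sq q p, sq_nonneg (dK n q p)]

end Heisenberg

/-- For `γ ∈ ((n+1)/(n+2), 1]` the Hölder homotopy group `π_n^γ(ℍ^n)` is
nontrivial: there is a map `f : S^n → ℝ^{2n+1}` which is Lipschitz into `ℍ^n` but admits no
`γ`-Hölder (into `ℍ^n`) extension `F : B̄^{n+1} → ℝ^{2n+1}`. -/
theorem stmt3 (n : ℕ) (hn : 1 ≤ n) (γ : ℝ)
    (hγ1 : ((n:ℝ)+1)/((n:ℝ)+2) < γ) (hγ2 : γ ≤ 1) :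
    ∃ f : EuclideanSpace ℝ (Fin (n+1)) → EuclideanSpace ℝ (Fin (2*n+1)),
      (∃ L : ℝ, ∀ x ∈ sphere (0 : EuclideanSpace ℝ (Fin (n+1))) 1,
          ∀ y ∈ sphere (0 : EuclideanSpace ℝ (Fin (n+1))) 1,
          dK n (f x) (f y) ≤ L * dist x y) ∧
      ¬ ∃ F : EuclideanSpace ℝ (Fin (n+1)) → EuclideanSpace ℝ (Fin (2*n+1)),
          (∀ x ∈ sphere (0 : EuclideanSpace ℝ (Fin (n+1))) 1, F x = f x) ∧
          ∃ C : ℝ, ∀ x ∈ closedBall (0 : EuclideanSpace ℝ (Fin (n+1))) 1,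
              ∀ y ∈ closedBall (0 : EuclideanSpace ℝ (Fin (n+1))) 1,
              dK n (F x) (F y) ≤ C * dist x y ^ γ := by
  have hγ0 : 0 < γ := lt_trans (by positivity) hγ1
  refine ⟨whitneyLift, ⟨3, fun x hx y hy => dK_whitneyLift_le hx hy⟩, ?_⟩
  rintro ⟨F, hFS, C, hF⟩
  have hC : ∀ x ∈ closedBall (0 : EuclideanSpace ℝ (Fin (n + 1))) 1,
      ∀ y ∈ closedBall (0 : EuclideanSpace ℝ (Fin (n + 1))) 1,
      dK n (F x) (F y) ≤ |C| * dist x y ^ γ := fun x hx y hy =>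
    (hF x hx y hy).trans (by gcongr; exact le_abs_self C)
  have hsucc : ∀ p ∈ closedBall (0 : EuclideanSpace ℝ (Fin (n + 1))) 1,
      ∀ q ∈ closedBall (0 : EuclideanSpace ℝ (Fin (n + 1))) 1, ∀ j : Fin n,
      |frontCoord (F q) j.succ - frontCoord (F p) j.succ| ≤ |C| * dist q p ^ γ :=
    fun p hp q hq j => (abs_frontCoord_succ_sub_le _ _ j).trans (hC q hq p hp)
  have hzero : ∀ p ∈ closedBall (0 : EuclideanSpace ℝ (Fin (n + 1))) 1,
      ∀ q ∈ closedBall (0 : EuclideanSpace ℝ (Fin (n + 1))) 1,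
      |frontCoord (F q) 0 - frontCoord (F p) 0 - ∑ j, (-3 * F p (yI n j)) *
        (frontCoord (F q) j.succ - frontCoord (F p) j.succ)| ≤
        2 * C ^ 2 * dist q p ^ (2 * γ) := by
    intro p hp q hq
    refine (abs_frontCoord_zero_sub_le _ _).trans ?_
    have h := pow_le_pow_left₀ (dK_nonneg _ _) (hC q hq p hp) 2
    rw [mul_pow, sq_abs, ← Real.rpow_natCast, ← Real.rpow_natCast (dist q p ^ γ),
      ← Real.rpow_mul dist_nonneg, mul_comm γ] at h
    norm_num at h
    linarith
  refine volume_image_closedBall_ne_zero (g := fun x => frontCoord (F x))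
    (continuousOn_of_shearedHolder hγ0 hsucc hzero) (fun x hx => ?_)
    (volume_image_eq_zero_of_shearedHolder hγ1 (abs_nonneg C) (by positivity)
      measure_closedBall_lt_top.ne hsucc hzero)
  ext i
  induction i using Fin.cases with
  | zero =>
    have hsum : ∑ j : Fin n, whitneyLift x (xI n j) * whitneyLift x (yI n j) =
        x 0 * (1 - x 0 ^ 2) := by
      rw [← sum_succ_sq_of_mem_sphere hx, Finset.mul_sum]
      refine Finset.sum_congr rfl fun j _ => ?_
      rw [whitneyLift_xI, whitneyLift_yI]
      ring
    simp only [frontCoord_zero, cubeFirst_zero, hFS x hx]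
    rw [hsum, whitneyLift_tI]
    ring
  | succ j => simp only [frontCoord_succ, cubeFirst_succ, hFS x hx, whitneyLift_xI]
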